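/- The three sets C₁ = {Y⊗Y, I₂⊗Y, Y⊗I₂}, C₂ = {Y⊗Z, Z⊗X, X⊗Y}, C₃ = {X⊗I₂, I₂⊗Z, X⊗Z} are pairwise disjoint maximal commuting classes of two-qubit Pauli operators, and they form an unextendible set of classes: the remaining six nonidentity two-qubit Pauli operators {I₂⊗X, X⊗X, Y⊗X, Z⊗I₂, Z⊗Y, Z⊗Z} contain no 3-element subset of pairwise commuting matrices. -/

import Mathlib

/-!
Two-qubit Pauli operators are labelled injectively by pairs in `Fin 4 × Fin 4`, since distinct ones
are orthogonal for the trace form (`trace_pauli_mul`, `pauli2_injective`). Two of them either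
commute or anticommute, according to the parity of the number of tensor slots in which the factors
anticommute (`commute_pauli2_iff`). Every claim thereby becomes a finite statement about labels,
which is decidable. For unextendibility, the reason is that the six remaining operators split into
the two triples `{I⊗X, Z⊗Y, Z⊗Z}` and `{X⊗X, Y⊗X, Z⊗I}`, each pairwise anticommuting; three of
the six always include two from one triple.
-/

open Matrix
open scoped Kronecker

noncomputable section

/-- The 2×2 identity matrix. -/
def I2 : Matrix (Fin 2) (Fin 2) ℂ := 1

/-- The Pauli X matrix. -/
def pX : Matrix (Fin 2) (Fin 2) ℂ := !![0, 1; 1, 0]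

/-- The Pauli Z matrix. -/
def pZ : Matrix (Fin 2) (Fin 2) ℂ := !![1, 0; 0, -1]

/-- The Pauli Y matrix, Y = iXZ. -/
def pY : Matrix (Fin 2) (Fin 2) ℂ := Complex.I • (pX * pZ)

/-- The 16 two-qubit Pauli operators σ ⊗ τ with σ, τ ∈ {I₂, X, Y, Z}. -/
def TwoQubitPauli : Set (Matrix (Fin 2 × Fin 2) (Fin 2 × Fin 2) ℂ) :=
  { M | ∃ σ ∈ ({I2, pX, pY, pZ} : Set (Matrix (Fin 2) (Fin 2) ℂ)),
        ∃ τ ∈ ({I2, pX, pY, pZ} : Set (Matrix (Fin 2) (Fin 2) ℂ)), M = σ ⊗ₖ τ }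

/-- A maximal commuting class in dimension 4: three pairwise commuting two-qubit
Pauli operators, none equal to I₂ ⊗ I₂. -/
def MaxCommClass4 (C : Set (Matrix (Fin 2 × Fin 2) (Fin 2 × Fin 2) ℂ)) : Prop :=
  C ⊆ TwoQubitPauli \ {1} ∧ C.ncard = 3 ∧ ∀ U ∈ C, ∀ V ∈ C, Commute U V

/-- The single-qubit Pauli matrices, labelled `0, 1, 2, 3` for `I, X, Y, Z`. -/
def pauli : Fin 4 → Matrix (Fin 2) (Fin 2) ℂ := ![I2, pX, pY, pZ]

/-- The two-qubit Pauli operator with the given pair of labels. -/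
def pauli2 (p : Fin 4 × Fin 4) : Matrix (Fin 2 × Fin 2) (Fin 2 × Fin 2) ℂ :=
  pauli p.1 ⊗ₖ pauli p.2

/-- The sign `ε` in `σ τ = ε τ σ` for the single-qubit Pauli matrices labelled `a` and `b`. -/
def pauliSign (a b : Fin 4) : ℤ := if a = 0 ∨ b = 0 ∨ a = b then 1 else -1

/-- The sign `ε` in `U V = ε V U` for the two-qubit Pauli operators labelled `p` and `q`. -/
def pauliSign2 (p q : Fin 4 × Fin 4) : ℤ := pauliSign p.1 q.1 * pauliSign p.2 q.2

lemma pauli_mul (a b : Fin 4) :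
    pauli a * pauli b = (pauliSign a b : ℂ) • (pauli b * pauli a) := by
  fin_cases a <;> fin_cases b <;>
    simp [pauli, pauliSign, I2, pX, pY, pZ]

lemma pauli_sq (a : Fin 4) : pauli a * pauli a = 1 := by
  fin_cases a <;> simp [pauli, I2, pX, pY, pZ, Matrix.one_fin_two]

/-- Distinct single-qubit Pauli matrices are orthogonal for the trace form. -/
lemma trace_pauli_mul (a b : Fin 4) :
    (pauli a * pauli b).trace = if a = b then 2 else 0 := by
  split_ifs with h
  · subst h
    simp [pauli_sq]
  · revert h
    fin_cases a <;> fin_cases b <;>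
      simp [pauli, I2, pX, pY, pZ, Matrix.trace_fin_two]

lemma pauli2_sq (p : Fin 4 × Fin 4) : pauli2 p * pauli2 p = 1 := by
  simp [pauli2, ← Matrix.mul_kronecker_mul, pauli_sq]

lemma pauli2_injective : Function.Injective pauli2 := by
  intro p q h
  have h1 : (pauli2 p * pauli2 q).trace = 4 := by
    rw [← h, pauli2_sq, Matrix.trace_one]
    simp
  rw [pauli2, pauli2, ← Matrix.mul_kronecker_mul, Matrix.trace_kronecker, trace_pauli_mul,
    trace_pauli_mul] at h1
  by_cases ha : p.1 = q.1 <;> by_cases hb : p.2 = q.2 <;> simp [ha, hb] at h1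
  exact Prod.ext ha hb

lemma pauli2_mul (p q : Fin 4 × Fin 4) :
    pauli2 p * pauli2 q = (pauliSign2 p q : ℂ) • (pauli2 q * pauli2 p) := by
  simp only [pauli2, ← Matrix.mul_kronecker_mul]
  rw [pauli_mul p.1, pauli_mul p.2, Matrix.smul_kronecker, Matrix.kronecker_smul, smul_smul,
    pauliSign2, Int.cast_mul]

lemma commute_pauli2_iff (p q : Fin 4 × Fin 4) :
    Commute (pauli2 p) (pauli2 q) ↔ pauliSign2 p q = 1 := by
  constructor
  · intro h
    have h1 := pauli2_mul p q
    -- Multiplying `U V = ε U V` by `V` on the right and `U` on the left gives `1 = ε • 1`.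
    rw [← h.eq] at h1
    have h2 := congrArg (fun M => pauli2 p * (M * pauli2 q)) h1
    simp only [Matrix.smul_mul, Matrix.mul_smul, Matrix.mul_assoc, pauli2_sq, Matrix.mul_one]
      at h2
    have h3 := congrFun (congrFun h2 (0, 0)) (0, 0)
    simp only [Matrix.smul_apply, Matrix.one_apply_eq, smul_eq_mul, mul_one] at h3
    exact_mod_cast h3.symm
  · intro h
    have h1 := pauli2_mul p q
    rwa [h, Int.cast_one, one_smul] at h1

lemma pauli2_mem (p : Fin 4 × Fin 4) : pauli2 p ∈ TwoQubitPauli := by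
  have h : ∀ a, pauli a ∈ ({I2, pX, pY, pZ} : Set (Matrix (Fin 2) (Fin 2) ℂ)) := by
    intro a
    fin_cases a <;> simp [pauli]
  exact ⟨_, h p.1, _, h p.2, rfl⟩

lemma pauli2_zero : pauli2 (0, 0) = 1 := by
  simp [pauli2, pauli, I2]

/-- A set of three nonidentity labels with pairwise sign `1` labels a maximal commuting class. -/
lemma maxCommClass4_image (T : Finset (Fin 4 × Fin 4)) (h0 : (0, 0) ∉ T) (hc : T.card = 3)
    (hs : ∀ p ∈ T, ∀ q ∈ T, pauliSign2 p q = 1) : MaxCommClass4 (pauli2 '' (T : Set _)) := by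
  refine ⟨?_, ?_, ?_⟩
  · rintro _ ⟨p, hp, rfl⟩
    refine ⟨pauli2_mem p, fun h => h0 ?_⟩
    rw [Set.mem_singleton_iff, ← pauli2_zero] at h
    exact pauli2_injective h ▸ hp
  · rw [Set.ncard_image_of_injective _ pauli2_injective, Set.ncard_coe_finset, hc]
  · rintro _ ⟨p, hp, rfl⟩ _ ⟨q, hq, rfl⟩
    exact (commute_pauli2_iff p q).2 (hs p hp q hq)

lemma disjoint_image {S T : Finset (Fin 4 × Fin 4)} (h : Disjoint S T) :
    Disjoint (pauli2 '' (S : Set _)) (pauli2 '' (T : Set _)) :=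
  (Set.disjoint_image_iff pauli2_injective).2 (Finset.disjoint_coe.2 h)


/-- C₁ = {Y⊗Y, I⊗Y, Y⊗I}, C₂ = {Y⊗Z, Z⊗X, X⊗Y}, C₃ = {X⊗I, I⊗Z, X⊗Z}
are pairwise disjoint maximal commuting classes forming an unextendible set: the
remaining six nonidentity two-qubit Pauli operators contain no 3-element pairwise
commuting subset. -/
theorem stmt12 :
    MaxCommClass4 {pY ⊗ₖ pY, I2 ⊗ₖ pY, pY ⊗ₖ I2} ∧
    MaxCommClass4 {pY ⊗ₖ pZ, pZ ⊗ₖ pX, pX ⊗ₖ pY} ∧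
    MaxCommClass4 {pX ⊗ₖ I2, I2 ⊗ₖ pZ, pX ⊗ₖ pZ} ∧
    Disjoint ({pY ⊗ₖ pY, I2 ⊗ₖ pY, pY ⊗ₖ I2} :
        Set (Matrix (Fin 2 × Fin 2) (Fin 2 × Fin 2) ℂ))
      {pY ⊗ₖ pZ, pZ ⊗ₖ pX, pX ⊗ₖ pY} ∧
    Disjoint ({pY ⊗ₖ pY, I2 ⊗ₖ pY, pY ⊗ₖ I2} :
        Set (Matrix (Fin 2 × Fin 2) (Fin 2 × Fin 2) ℂ))
      {pX ⊗ₖ I2, I2 ⊗ₖ pZ, pX ⊗ₖ pZ} ∧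
    Disjoint ({pY ⊗ₖ pZ, pZ ⊗ₖ pX, pX ⊗ₖ pY} :
        Set (Matrix (Fin 2 × Fin 2) (Fin 2 × Fin 2) ℂ))
      {pX ⊗ₖ I2, I2 ⊗ₖ pZ, pX ⊗ₖ pZ} ∧
    ¬ ∃ S : Set (Matrix (Fin 2 × Fin 2) (Fin 2 × Fin 2) ℂ),
        S ⊆ ({I2 ⊗ₖ pX, pX ⊗ₖ pX, pY ⊗ₖ pX, pZ ⊗ₖ I2, pZ ⊗ₖ pY, pZ ⊗ₖ pZ} :
          Set (Matrix (Fin 2 × Fin 2) (Fin 2 × Fin 2) ℂ)) ∧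
        S.ncard = 3 ∧ ∀ U ∈ S, ∀ V ∈ S, Commute U V := by
  have e1 : ({pY ⊗ₖ pY, I2 ⊗ₖ pY, pY ⊗ₖ I2} : Set (Matrix (Fin 2 × Fin 2) (Fin 2 × Fin 2) ℂ)) =
      pauli2 '' (({(2, 2), (0, 2), (2, 0)} : Finset (Fin 4 × Fin 4)) : Set _) := by
    simp [Set.image_insert_eq, pauli2, pauli]
  have e2 : ({pY ⊗ₖ pZ, pZ ⊗ₖ pX, pX ⊗ₖ pY} : Set (Matrix (Fin 2 × Fin 2) (Fin 2 × Fin 2) ℂ)) =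
      pauli2 '' (({(2, 3), (3, 1), (1, 2)} : Finset (Fin 4 × Fin 4)) : Set _) := by
    simp [Set.image_insert_eq, pauli2, pauli]
  have e3 : ({pX ⊗ₖ I2, I2 ⊗ₖ pZ, pX ⊗ₖ pZ} : Set (Matrix (Fin 2 × Fin 2) (Fin 2 × Fin 2) ℂ)) =
      pauli2 '' (({(1, 0), (0, 3), (1, 3)} : Finset (Fin 4 × Fin 4)) : Set _) := by
    simp [Set.image_insert_eq, pauli2, pauli]
  have e4 : ({I2 ⊗ₖ pX, pX ⊗ₖ pX, pY ⊗ₖ pX, pZ ⊗ₖ I2, pZ ⊗ₖ pY, pZ ⊗ₖ pZ} :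
        Set (Matrix (Fin 2 × Fin 2) (Fin 2 × Fin 2) ℂ)) =
      pauli2 '' (({(0, 1), (1, 1), (2, 1), (3, 0), (3, 2), (3, 3)} :
        Finset (Fin 4 × Fin 4)) : Set _) := by
    simp [Set.image_insert_eq, pauli2, pauli]
  rw [e1, e2, e3, e4]
  refine ⟨maxCommClass4_image _ (by decide) (by decide) (by decide),
    maxCommClass4_image _ (by decide) (by decide) (by decide),
    maxCommClass4_image _ (by decide) (by decide) (by decide),
    disjoint_image (by decide), disjoint_image (by decide), disjoint_image (by decide), ?_⟩
  rintro ⟨S, hS, hcard, hcomm⟩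
  obtain ⟨T', hT, rfl⟩ := Set.subset_image_iff.1 hS
  lift T' to Finset (Fin 4 × Fin 4) using Set.toFinite T' with T
  rw [Set.ncard_image_of_injective _ pauli2_injective, Set.ncard_coe_finset] at hcard
  -- `A` is the triple `{I⊗X, Z⊗Y, Z⊗Z}`; two of the three labels in `T` lie on the same side of it.
  let A : Finset (Fin 4 × Fin 4) := {(0, 1), (3, 2), (3, 3)}
  obtain ⟨p, hp, q, hq, hne, hA⟩ := Finset.exists_ne_map_eq_of_card_lt_of_maps_to
    (s := T) (t := (Finset.univ : Finset Bool)) (f := fun p => decide (p ∈ A))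
    (by rw [hcard]; decide) (fun _ _ => Finset.mem_coe.2 (Finset.mem_univ _))
  have key : ∀ p ∈ ({(0, 1), (1, 1), (2, 1), (3, 0), (3, 2), (3, 3)} : Finset (Fin 4 × Fin 4)),
      ∀ q ∈ ({(0, 1), (1, 1), (2, 1), (3, 0), (3, 2), (3, 3)} : Finset (Fin 4 × Fin 4)),
      p ≠ q → decide (p ∈ A) = decide (q ∈ A) → pauliSign2 p q ≠ 1 := by
    decide
  exact key p (hT hp) q (hT hq) hne hA ((commute_pauli2_iff p q).1
    (hcomm _ (Set.mem_image_of_mem _ hp) _ (Set.mem_image_of_mem _ hq)))
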